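/- Fix a prime p and natural numbers m ≤ n, a ≤ n, u > 0. With the equivalence relation ≡ᵘₐ on m-element subsets of {1,...,n} defined by f₁ ≡ f₂ iff f₁ ∩ {1,...,n-a} = f₂ ∩ {1,...,n-a} and f₁(j) ≡ f₂(j) (mod u) for all j, suppose u·p^(v_p(b!)+1) divides a, where b = |f ∩ ({1,...,n} \ {1,...,n-a})| for elements f of an equivalence class δ not contained in D_{m,n-a}. Then the cardinality of δ is divisible by p. -/

import Mathlib

/-- `D_{m,n}`: the `m`-element subsets of `{1,...,n}`. -/
def Dmn (m n : ℕ) : Finset (Finset ℕ) := (Finset.Icc 1 n).powersetCard m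

/-- The equivalence relation `≡ᵘₐ`: `f₁ ≡ f₂` iff they have the same intersection with
`{1,...,n-a}` and their `j`-th elements (in increasing order) are congruent mod `u`. -/
def EqvRel (n a u : ℕ) (f₁ f₂ : Finset ℕ) : Prop :=
  f₁ ∩ Finset.Icc 1 (n - a) = f₂ ∩ Finset.Icc 1 (n - a) ∧
  List.Forall₂ (fun x y => x ≡ y [MOD u]) (f₁.sort (· ≤ ·)) (f₂.sort (· ≤ ·))

/-!
A member of the class of `f₀` is the common part `h = f₀ ∩ {1, …, n - a}` together with `b` larger
elements having prescribed residues. Write each of these, counted from `n - a + 1`, as a quotient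
and a remainder modulo `u`: neighbouring elements may share their quotient exactly when the
remainders increase. With `k < b` such ascents and `q = a / u` possible quotients, the class has
`(q + k).choose b` members. The numerator of this binomial coefficient is a product of `b`
consecutive integers, one of which is `q`, so `q` divides `b!` times the cardinality; comparing
`p`-adic valuations leaves a factor `p`.

Letting the interval above `h` grow by one element at a time turns the count into Pascal's rule.
-/

open Finset

theorem sort_union_of_forall_rel {α : Type*} [DecidableEq α] (r : α → α → Prop)
    [DecidableRel r] [IsTrans α r] [Std.Antisymm r] [Std.Total r] {s t : Finset α}
    (hst : Disjoint s t) (h : ∀ x ∈ s, ∀ y ∈ t, r x y) :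
    (s ∪ t).sort r = s.sort r ++ t.sort r := by
  have hnodup : (s.sort r ++ t.sort r).Nodup :=
    List.nodup_append'.2 ⟨sort_nodup _ _, sort_nodup _ _, fun x hs ht =>
      disjoint_left.1 hst ((mem_sort r).1 hs) ((mem_sort r).1 ht)⟩
  have hpairwise : (s.sort r ++ t.sort r).Pairwise r :=
    List.pairwise_append.2 ⟨pairwise_sort _ _, pairwise_sort _ _,
      fun x hx y hy => h x ((mem_sort r).1 hx) y ((mem_sort r).1 hy)⟩
  rw [← (List.toFinset_sort r hnodup).2 hpairwise, List.toFinset_append, sort_toFinset,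
    sort_toFinset]

theorem sort_ge_eq_reverse_sort_le {α : Type*} [LinearOrder α] (s : Finset α) :
    s.sort (· ≥ ·) = (s.sort (· ≤ ·)).reverse :=
  List.Perm.eq_of_pairwise' (pairwise_sort _ _) (List.pairwise_reverse.2 (pairwise_sort s (· ≤ ·)))
    (((sort_perm_toList s _).trans (sort_perm_toList s _).symm).trans (List.reverse_perm _).symm)

theorem Icc_insert_eq_union_image {α : Type*} [DecidableEq α] {h t : Finset α} {a : α}
    (hht : h ⊆ t) (ha : a ∉ h) :
    Icc h (insert a t) = Icc h t ∪ (Icc h t).image (insert a) := by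
  rw [Icc_eq_image_powerset (hht.trans (subset_insert a t)), Icc_eq_image_powerset hht,
    insert_sdiff_of_notMem _ ha, powerset_insert, image_union, image_image, image_image]
  simp only [Function.comp_def, union_insert]

section RelatedSets

variable {α β : Type*} [LinearOrder α] {R : α → β → Prop} {h t : Finset α} {L : List β}

open Classical in
/-- The finsets between `h` and `t` whose elements are related by `R` termwise to the list `L`.
The elements are listed in decreasing order, so that adjoining a new maximum to `t` corresponds to
adding a head to `L`. -/
noncomputable def relatedSets (R : α → β → Prop) (h t : Finset α) (L : List β) :
    Finset (Finset α) :=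
  {g ∈ Icc h t | List.Forall₂ R (g.sort (· ≥ ·)) L}

theorem mem_relatedSets {g : Finset α} :
    g ∈ relatedSets R h t L ↔ (h ⊆ g ∧ g ⊆ t) ∧ List.Forall₂ R (g.sort (· ≥ ·)) L := by
  simp [relatedSets]

theorem card_eq_length_of_mem_relatedSets {g : Finset α} (hg : g ∈ relatedSets R h t L) :
    g.card = L.length := by
  rw [← (mem_relatedSets.1 hg).2.length_eq, length_sort]

theorem relatedSets_eq_empty_of_card_lt (hL : t.card < L.length) : relatedSets R h t L = ∅ := by
  refine eq_empty_of_forall_notMem fun g hg => hL.not_ge ?_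
  rw [← card_eq_length_of_mem_relatedSets hg]
  exact card_le_card (mem_relatedSets.1 hg).1.2

theorem relatedSets_sort_self {R : α → α → Prop} [Std.Refl R] (hht : h ⊆ t) :
    relatedSets R h t (h.sort (· ≥ ·)) = {h} := by
  refine eq_singleton_iff_unique_mem.2
    ⟨mem_relatedSets.2 ⟨⟨Subset.rfl, hht⟩, List.forall₂_same.2 fun x _ => refl_of R x⟩,
      fun g hg => (eq_of_subset_of_card_le (mem_relatedSets.1 hg).1.1 ?_).symm⟩
  rw [card_eq_length_of_mem_relatedSets hg, length_sort]

theorem card_relatedSets_insert_cons (hht : h ⊆ t) {a : α} (ha : ∀ x ∈ t, x < a) (b : β)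
    [Decidable (R a b)] :
    (relatedSets R h (insert a t) (b :: L)).card =
      (relatedSets R h t (b :: L)).card + if R a b then (relatedSets R h t L).card else 0 := by
  classical
  have ha_notMem : ∀ g ∈ Icc h t, a ∉ g := fun g hg hag => (ha a ((mem_Icc.1 hg).2 hag)).false
  have hforall₂ : ∀ g ∈ Icc h t,
      List.Forall₂ R ((insert a g).sort (· ≥ ·)) (b :: L) ↔
        R a b ∧ List.Forall₂ R (g.sort (· ≥ ·)) L := by
    intro g hg
    rw [sort_insert _ (fun x hx => (ha x ((mem_Icc.1 hg).2 hx)).le) (ha_notMem g hg),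
      List.forall₂_cons]
  have hdisj : Disjoint (Icc h t) ((Icc h t).image (insert a)) := by
    refine disjoint_left.2 fun g hg hg' => ha_notMem g hg ?_
    obtain ⟨g', -, rfl⟩ := mem_image.1 hg'
    exact mem_insert_self a g'
  have hinj : Set.InjOn (insert a) (Icc h t : Set (Finset α)) := fun g hg g' hg' heq => by
    rw [← erase_insert (ha_notMem g hg), heq, erase_insert (ha_notMem g' hg')]
  rw [relatedSets, Icc_insert_eq_union_image hht fun hah => (ha a (hht hah)).false, filter_union,
    card_union_of_disjoint (disjoint_filter_filter hdisj), filter_image,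
    card_image_of_injOn (hinj.mono (coe_subset.2 (filter_subset _ _))), filter_congr hforall₂]
  split_ifs with hR <;> simp [relatedSets, hR]

end RelatedSets

section Residues

variable {u : ℕ}

theorem exists_add_modEq_iff_modEq (hu : 0 < u) (s c : ℕ) :
    ∃ v, ∀ i, s + i ≡ c [MOD u] ↔ i ≡ v [MOD u] := by
  obtain ⟨w, rfl⟩ := Nat.exists_eq_add_of_le' hu
  have hv : s + (c + s * w) ≡ c [MOD w + 1] := by
    rw [show s + (c + s * w) = c + (w + 1) * s by ring]
    simp [Nat.ModEq]
  exact ⟨c + s * w, fun i =>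
    ⟨fun hi => Nat.ModEq.add_left_cancel' s (hi.trans hv.symm), fun hi => (hi.add_left s).trans hv⟩⟩

theorem count_add_modEq_mul (hu : 0 < u) (s c q : ℕ) :
    (u * q).count (s + · ≡ c [MOD u]) = q := by
  obtain ⟨v, hv⟩ := exists_add_modEq_iff_modEq hu s c
  simp only [hv, Nat.count_modEq_card _ hu, Nat.mul_div_cancel_left _ hu, Nat.mul_mod_right,
    Nat.not_lt_zero, if_false, add_zero]

theorem exists_count_add_modEq_eq_add (hu : 0 < u) (s c d : ℕ) :
    ∃ e ≤ 1, ∀ N, s + N ≡ c [MOD u] →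
      N.count (s + · ≡ d [MOD u]) = N.count (s + · ≡ c [MOD u]) + e := by
  obtain ⟨v, hv⟩ := exists_add_modEq_iff_modEq hu s c
  obtain ⟨w, hw⟩ := exists_add_modEq_iff_modEq hu s d
  refine ⟨if w % u < v % u then 1 else 0, by split_ifs <;> simp, fun N hN => ?_⟩
  have hNv : N % u = v % u := (hv N).1 hN
  simp only [hv, hw, Nat.count_modEq_card _ hu, hNv, lt_irrefl, if_false, add_zero]

variable {h : Finset ℕ} {s : ℕ}

theorem card_relatedSets_cons_eq_choose (hs : ∀ x ∈ h, x < s) {c l k : ℕ} {L : List ℕ}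
    (hk : k ≤ l) (hhL : h.card ≤ L.length)
    (hL : ∀ N, s + N ≡ c [MOD u] →
      (relatedSets (· ≡ · [MOD u]) h (h ∪ Ico s (s + N)) L).card =
        (N.count (s + · ≡ c [MOD u]) + k).choose l) (N : ℕ) :
    (relatedSets (· ≡ · [MOD u]) h (h ∪ Ico s (s + N)) (c :: L)).card =
      (N.count (s + · ≡ c [MOD u]) + k).choose (l + 1) := by
  induction N with
  | zero =>
    rw [add_zero, Ico_self, union_empty, Nat.count_zero, zero_add,
      Nat.choose_eq_zero_of_lt (Nat.lt_succ_of_le hk),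
      relatedSets_eq_empty_of_card_lt (Nat.lt_succ_of_le hhL), card_empty]
  | succ N ih =>
    have hunion : h ∪ Ico s (s + (N + 1)) = insert (s + N) (h ∪ Ico s (s + N)) := by
      rw [← union_insert, ← add_assoc, insert_Ico_right_eq_Ico_add_one (by omega)]
    have hlt : ∀ x ∈ h ∪ Ico s (s + N), x < s + N := fun x hx =>
      (mem_union.1 hx).elim (fun hx => (hs x hx).trans_le (Nat.le_add_right s N))
        fun hx => (mem_Ico.1 hx).2
    rw [hunion, card_relatedSets_insert_cons subset_union_left hlt, ih, Nat.count_succ]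
    by_cases hN : s + N ≡ c [MOD u]
    · rw [if_pos hN, if_pos hN, hL N hN, add_right_comm, Nat.choose_succ_succ', add_comm]
    · rw [if_neg hN, if_neg hN, add_zero, add_zero]

theorem exists_card_relatedSets_eq_choose (hu : 0 < u) (hs : ∀ x ∈ h, x < s) (c : ℕ)
    (L : List ℕ) :
    ∃ k ≤ L.length, ∀ N,
      (relatedSets (· ≡ · [MOD u]) h (h ∪ Ico s (s + N))
        (c :: (L ++ h.sort (· ≥ ·)))).card =
      (N.count (s + · ≡ c [MOD u]) + k).choose (L.length + 1) := by
  have hlen (L : List ℕ) : h.card ≤ (L ++ h.sort (· ≥ ·)).length := by simp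
  induction L generalizing c with
  | nil =>
    have : Std.Refl (· ≡ · [MOD u]) := ⟨Nat.ModEq.refl⟩
    refine ⟨0, le_rfl, card_relatedSets_cons_eq_choose hs le_rfl (hlen []) fun N _ => ?_⟩
    rw [List.nil_append, relatedSets_sort_self subset_union_left, card_singleton, List.length_nil,
      Nat.choose_zero_right]
  | cons d L ih =>
    obtain ⟨k, hk, hcard⟩ := ih d
    obtain ⟨e, he, hcount⟩ := exists_count_add_modEq_eq_add hu s c d
    refine ⟨e + k, by rw [List.length_cons]; omega,
      card_relatedSets_cons_eq_choose hs (by rw [List.length_cons]; omega) (hlen (d :: L))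
        fun N hN => ?_⟩
    rw [List.cons_append, hcard, hcount N hN, add_assoc, List.length_cons]

end Residues

theorem dvd_factorial_mul_choose_add {b k : ℕ} (A : ℕ) (hk : k < b) :
    A ∣ b.factorial * (A + k).choose b := by
  rw [← Nat.descFactorial_eq_factorial_mul_choose, Nat.descFactorial_eq_prod_range]
  simpa using dvd_prod_of_mem (fun i => A + k - i) (mem_range.2 hk)

theorem subset_union_and_inter_eq_iff {α : Type*} [DecidableEq α] {f h I J : Finset α}
    (hIJ : Disjoint I J) (hI : h ⊆ I) : f ⊆ I ∪ J ∧ f ∩ I = h ↔ h ⊆ f ∧ f ⊆ h ∪ J := by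
  grind [disjoint_left]

section EquivClass

variable {m n a u : ℕ} {f₀ : Finset ℕ}

theorem sort_ge_eq_append_of_subset_Icc {f : Finset ℕ} (hf : f ⊆ Icc 1 n) (k : ℕ) :
    f.sort (· ≥ ·) = (f \ Icc 1 k).sort (· ≥ ·) ++ (f ∩ Icc 1 k).sort (· ≥ ·) := by
  rw [← sort_union_of_forall_rel _ (disjoint_sdiff_inter _ _), sdiff_union_inter]
  intro x hx y hy
  have hx1 := hf (mem_sdiff.1 hx).1
  simp only [mem_sdiff, mem_inter, mem_Icc] at hx hy hx1
  omega

open Classical in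
theorem filter_eqvRel_eq_relatedSets (ha : a ≤ n) (hf₀ : f₀ ∈ Dmn m n) :
    {f ∈ Dmn m n | EqvRel n a u f f₀} =
      relatedSets (· ≡ · [MOD u]) (f₀ ∩ Icc 1 (n - a))
        (f₀ ∩ Icc 1 (n - a) ∪ Ico (n - a + 1) (n - a + 1 + a)) (f₀.sort (· ≥ ·)) := by
  have hIcc : Icc 1 n = Icc 1 (n - a) ∪ Ico (n - a + 1) (n - a + 1 + a) := by
    ext x
    simp only [mem_union, mem_Icc, mem_Ico]
    omega
  have hdisj : Disjoint (Icc 1 (n - a)) (Ico (n - a + 1) (n - a + 1 + a)) :=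
    disjoint_left.2 fun x hx hx' => by
      rw [mem_Icc] at hx
      rw [mem_Ico] at hx'
      omega
  ext f
  rw [mem_filter, mem_relatedSets, EqvRel, Dmn, mem_powersetCard,
    sort_ge_eq_reverse_sort_le, sort_ge_eq_reverse_sort_le, List.forall₂_reverse_iff,
    ← subset_union_and_inter_eq_iff hdisj inter_subset_right, ← hIcc, and_assoc, and_assoc]
  refine and_congr_right fun _ => and_iff_right_of_imp fun ⟨_, hsort⟩ => ?_
  rw [← (mem_powersetCard.1 hf₀).2, ← length_sort (· ≤ ·), hsort.length_eq, length_sort]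

open Classical in
theorem exists_card_filter_eqvRel_eq_choose {q : ℕ} (hq : u * q ≤ n) (hf₀ : f₀ ∈ Dmn m n)
    (hnot : ¬ f₀ ⊆ Icc 1 (n - u * q)) :
    ∃ k < (f₀ \ Icc 1 (n - u * q)).card, {f ∈ Dmn m n | EqvRel n (u * q) u f f₀}.card =
      (q + k).choose (f₀ \ Icc 1 (n - u * q)).card := by
  have hsub := (mem_powersetCard.1 hf₀).1
  have hu : 0 < u := by
    refine Nat.pos_of_ne_zero ?_
    rintro rfl
    exact hnot (by rwa [zero_mul, Nat.sub_zero])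
  obtain ⟨c, L, hcL⟩ : ∃ c L, (f₀ \ Icc 1 (n - u * q)).sort (· ≥ ·) = c :: L :=
    List.exists_cons_of_ne_nil fun hnil => hnot <| sdiff_eq_empty_iff_subset.1 <| by
      rw [← sort_toFinset (f₀ \ _) (· ≥ ·), hnil, List.toFinset_nil]
  have hlen : (f₀ \ Icc 1 (n - u * q)).card = L.length + 1 := by
    rw [← length_sort (· ≥ ·), hcL, List.length_cons]
  have hlt : ∀ x ∈ f₀ ∩ Icc 1 (n - u * q), x < n - u * q + 1 := fun x hx =>
    Nat.lt_succ_of_le (mem_Icc.1 (mem_inter.1 hx).2).2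
  obtain ⟨k, hk, hchoose⟩ := exists_card_relatedSets_eq_choose hu hlt c L
  refine ⟨k, by rw [hlen]; exact Nat.lt_succ_of_le hk, ?_⟩
  rw [filter_eqvRel_eq_relatedSets hq hf₀, sort_ge_eq_append_of_subset_Icc hsub (n - u * q), hcL,
    List.cons_append, hchoose, count_add_modEq_mul hu, hlen]

open Classical in
theorem card_equiv_class_dvd_general (m n a u q : ℕ) (ha : a ≤ n) (f₀ : Finset ℕ)
    (hf₀ : f₀ ∈ Dmn m n) (hnot : ¬ f₀ ⊆ Icc 1 (n - a)) (hdvd : u * q ∣ a) :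
    q ∣ (f₀ \ Icc 1 (n - a)).card.factorial * {f ∈ Dmn m n | EqvRel n a u f f₀}.card := by
  obtain ⟨r, rfl⟩ := hdvd
  rw [mul_assoc] at ha hnot ⊢
  obtain ⟨k, hk, hcard⟩ := exists_card_filter_eqvRel_eq_choose ha hf₀ hnot
  rw [hcard]
  exact (dvd_mul_right q r).trans (dvd_factorial_mul_choose_add _ hk)

end EquivClass

/-- (First collision lemma, divisibility part.) If `δ` is an equivalence class of `≡ᵘₐ` on
`D_{m,n}` not contained in `D_{m,n-a}`, `b` is the number of elements of a member of `δ`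
lying in `{1,...,n} \ {1,...,n-a}`, and `u · p^(v_p(b!)+1)` divides `a`, then `p` divides
the cardinality of `δ`. -/
theorem card_equiv_class_dvd (p m n a u : ℕ) (hp : p.Prime) (hm : m ≤ n) (ha : a ≤ n)
    (hu : 0 < u) (f₀ : Finset ℕ) (hf₀ : f₀ ∈ Dmn m n)
    (hnot : ¬ f₀ ⊆ Finset.Icc 1 (n - a))
    (b : ℕ) (hb : b = (f₀ \ Finset.Icc 1 (n - a)).card)
    (hdvd : u * p ^ (padicValNat p (Nat.factorial b) + 1) ∣ a) :
    p ∣ (@Finset.filter _ (fun f => EqvRel n a u f f₀) (Classical.decPred _) (Dmn m n)).card := by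
  subst hb
  have := Fact.mk hp
  by_contra hcard
  exact pow_succ_padicValNat_not_dvd (Nat.factorial_ne_zero _)
    (hp.prime.pow_dvd_of_dvd_mul_right _ hcard
      (card_equiv_class_dvd_general m n a u _ ha f₀ hf₀ hnot hdvd))
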